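/- If ζ is a primitive root of unity of order 8k, then as q approaches ζ radially within the unit disk, lim_{q→ζ} ( S₀(q²) − (q²;q²)_∞[(q;q²)_∞³ + (−q;q²)_∞³]/(2(−q²;q²)_∞) ) = −2 Σ_{n=0}^{k−1} [(1+ζ⁴)(1+ζ⁸)···(1+ζ^{4n})] / [(1+ζ²)(1+ζ⁶)···(1+ζ^{4n+2})] · ζ^{2n²+6n+4}. -/

import Mathlib

open scoped BigOperators
open Filter

/-- finite q-Pochhammer symbol (a;q)_n -/
noncomputable def qP (a q : ℂ) (n : ℕ) : ℂ := ∏ i ∈ Finset.range n, (1 - a * q ^ i)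

/-- q-Pochhammer symbol extended to integer index: (a;q)_{-n} = 1/(a q^{-n};q)_n -/
noncomputable def qPZ (a q : ℂ) : ℤ → ℂ
  | Int.ofNat n => qP a q n
  | Int.negSucc n => 1 / qP (a * q ^ (-(n + 1 : ℤ))) q (n + 1)

/-- infinite q-Pochhammer symbol (a;q)_∞ -/
noncomputable def qPInf (a q : ℂ) : ℂ := ∏' n : ℕ, (1 - a * q ^ n)

/-- the eighth order mock theta function S₀ -/
noncomputable def S0 (q : ℂ) : ℂ :=
  ∑' n : ℕ, q ^ (n ^ 2) * qP (-q) (q ^ 2) n / qP (-q ^ 2) (q ^ 2) n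

lemma qP_succ (a q : ℂ) (n : ℕ) : qP a q (n + 1) = qP a q n * (1 - a * q ^ n) :=
  Finset.prod_range_succ _ _

lemma one_sub_ne_zero_of_norm_lt_one {z : ℂ} (hz : ‖z‖ < 1) : 1 - z ≠ 0 := by
  intro h
  rw [← sub_eq_zero.1 h] at hz
  simp at hz

lemma norm_mul_pow_lt_one {a p : ℂ} (ha : ‖a‖ < 1) (hp : ‖p‖ < 1) (n : ℕ) : ‖a * p ^ n‖ < 1 := by
  rw [norm_mul, norm_pow]
  exact mul_lt_one_of_nonneg_of_lt_one_left (norm_nonneg _) ha (pow_le_one₀ (norm_nonneg _) hp.le)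

lemma qP_ne_zero {a p : ℂ} (ha : ‖a‖ < 1) (hp : ‖p‖ < 1) (n : ℕ) : qP a p n ≠ 0 :=
  Finset.prod_ne_zero_iff.2 fun i _ ↦ one_sub_ne_zero_of_norm_lt_one (norm_mul_pow_lt_one ha hp i)

lemma summable_norm_neg_mul_pow (a : ℂ) {p : ℂ} (hp : ‖p‖ < 1) :
    Summable fun n : ℕ ↦ ‖-(a * p ^ n)‖ := by
  simp only [norm_neg, norm_mul, norm_pow]
  exact (summable_geometric_of_lt_one (norm_nonneg _) hp).mul_left _

lemma multipliable_qPInf (a : ℂ) {p : ℂ} (hp : ‖p‖ < 1) :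
    Multipliable fun n : ℕ ↦ 1 - a * p ^ n := by
  simpa [sub_eq_add_neg] using multipliable_one_add_of_summable (summable_norm_neg_mul_pow a hp)

lemma qPInf_ne_zero {a p : ℂ} (ha : ‖a‖ < 1) (hp : ‖p‖ < 1) : qPInf a p ≠ 0 := by
  have := tprod_one_add_ne_zero_of_summable (f := fun n : ℕ ↦ -(a * p ^ n))
    (fun i ↦ by
      simpa [sub_eq_add_neg] using one_sub_ne_zero_of_norm_lt_one (norm_mul_pow_lt_one ha hp i))
    (summable_norm_neg_mul_pow a hp)
  simpa [qPInf, sub_eq_add_neg] using this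

lemma tendsto_qP (a : ℂ) {p : ℂ} (hp : ‖p‖ < 1) :
    Tendsto (qP a p) atTop (nhds (qPInf a p)) :=
  (multipliable_qPInf a hp).hasProd.tendsto_prod_nat

lemma qPInf_eq_mul (a : ℂ) {p : ℂ} (hp : ‖p‖ < 1) :
    qPInf a p = (1 - a) * qPInf (a * p) p := by
  have h : (fun n : ℕ ↦ 1 - a * p ^ (n + 1)) = fun n ↦ 1 - a * p * p ^ n := by
    ext n; ring
  rw [qPInf, tprod_eq_zero_mul' (by rw [h]; exact multipliable_qPInf _ hp), h, qPInf]
  simp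

lemma qPInf_eq_qP_mul (a : ℂ) {p : ℂ} (hp : ‖p‖ < 1) (n : ℕ) :
    qPInf a p = qP a p n * qPInf (a * p ^ n) p := by
  induction n with
  | zero => simp [qP]
  | succ n ih => rw [ih, qP_succ, qPInf_eq_mul _ hp, pow_succ, mul_assoc a, mul_assoc]

lemma exists_norm_inv_qP_le {a p : ℂ} (ha : ‖a‖ < 1) (hp : ‖p‖ < 1) :
    ∃ C, ∀ n, ‖(qP a p n)⁻¹‖ ≤ C := by
  obtain ⟨C, hC⟩ := (Metric.isBounded_range_of_tendsto _
    ((tendsto_qP a hp).inv₀ (qPInf_ne_zero ha hp))).exists_norm_le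
  exact ⟨C, fun n ↦ hC _ ⟨n, rfl⟩⟩

/-- The values of a power series along `x * p ^ n` tend to its constant coefficient. -/
lemma tendsto_tsum_mul_pow {c : ℕ → ℂ} {p x : ℂ} (hp : ‖p‖ < 1)
    (hs : Summable fun n ↦ ‖c n * x ^ n‖) :
    Tendsto (fun n : ℕ ↦ ∑' j, c j * (x * p ^ n) ^ j) atTop (nhds (c 0)) := by
  have key := tendsto_tsum_of_dominated_convergence (𝓕 := atTop)
    (f := fun (n : ℕ) (j : ℕ) ↦ c j * (x * p ^ n) ^ j)
    (g := fun j ↦ if j = 0 then c 0 else 0) hs ?_ ?_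
  · simpa using key
  · intro j
    have h0 : Tendsto (fun n : ℕ ↦ c j * (x * p ^ n) ^ j) atTop (nhds (c j * (x * 0) ^ j)) :=
      (((tendsto_pow_atTop_nhds_zero_of_norm_lt_one hp).const_mul x).pow j).const_mul _
    rcases Nat.eq_zero_or_pos j with rfl | hj
    · simp
    · simpa [hj.ne'] using h0
  · refine Eventually.of_forall fun n j ↦ ?_
    rw [mul_pow, ← mul_assoc, norm_mul]
    refine mul_le_of_le_one_right (norm_nonneg _) ?_
    rw [norm_pow, norm_pow]
    exact pow_le_one₀ (by positivity) (pow_le_one₀ (norm_nonneg _) hp.le)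

lemma qP_self_succ (p : ℂ) (n : ℕ) : qP p p (n + 1) = qP p p n * (1 - p ^ (n + 1)) := by
  rw [qP_succ, pow_succ']

lemma inv_qP_self {p : ℂ} (hp : ‖p‖ < 1) (n : ℕ) :
    (qP p p n)⁻¹ = (qP p p (n + 1))⁻¹ * (1 - p ^ (n + 1)) := by
  have h1 := qP_ne_zero hp hp n
  have h2 := qP_ne_zero hp hp (n + 1)
  field_simp
  exact qP_self_succ p n

lemma summable_norm_euler_inv {p x : ℂ} (hp : ‖p‖ < 1) (hx : ‖x‖ < 1) :
    Summable fun n : ℕ ↦ ‖(qP p p n)⁻¹ * x ^ n‖ := by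
  obtain ⟨C, hC⟩ := exists_norm_inv_qP_le hp hp
  refine Summable.of_nonneg_of_le (fun _ ↦ norm_nonneg _) (fun n ↦ ?_)
    ((summable_geometric_of_lt_one (norm_nonneg x) hx).mul_left C)
  rw [norm_mul, norm_pow]
  gcongr
  exact hC n

/-- Euler: `∑ xⁿ / (p;p)_n = 1 / (x;p)_∞`. -/
lemma qPInf_mul_tsum_euler_inv {p x : ℂ} (hp : ‖p‖ < 1) (hx : ‖x‖ < 1) :
    qPInf x p * ∑' n : ℕ, (qP p p n)⁻¹ * x ^ n = 1 := by
  have step : ∀ y : ℂ, ‖y‖ < 1 → ∑' n : ℕ, (qP p p n)⁻¹ * (y * p) ^ n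
      = (1 - y) * ∑' n : ℕ, (qP p p n)⁻¹ * y ^ n := by
    intro y hy
    have s1 := (summable_norm_euler_inv hp hy).of_norm
    have s2 := (summable_norm_euler_inv hp (by simpa using norm_mul_pow_lt_one hy hp 1) :
      Summable fun n : ℕ ↦ ‖(qP p p n)⁻¹ * (y * p) ^ n‖).of_norm
    have h : ∑' n : ℕ, (qP p p n)⁻¹ * y ^ n - ∑' n : ℕ, (qP p p n)⁻¹ * (y * p) ^ n
        = y * ∑' n : ℕ, (qP p p n)⁻¹ * y ^ n := by
      rw [← s1.tsum_sub s2, (s1.sub s2).tsum_eq_zero_add, ← tsum_mul_left]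
      simp only [pow_zero, sub_self, zero_add]
      refine tsum_congr fun n ↦ ?_
      rw [inv_qP_self hp n]
      ring
    linear_combination -h
  have iter : ∀ n : ℕ, ∑' j : ℕ, (qP p p j)⁻¹ * (x * p ^ n) ^ j
      = qP x p n * ∑' n : ℕ, (qP p p n)⁻¹ * x ^ n := by
    intro n
    induction n with
    | zero => simp [qP]
    | succ n ih =>
      rw [pow_succ, ← mul_assoc, step _ (norm_mul_pow_lt_one hx hp n), ih, qP_succ]; ring
  have lim := tendsto_tsum_mul_pow hp (summable_norm_euler_inv hp hx)
  simp only [iter] at lim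
  have := tendsto_nhds_unique lim ((tendsto_qP x hp).mul_const _)
  rw [← this]
  simp [qP]

lemma summable_norm_euler {p : ℂ} (hp : ‖p‖ < 1) (x : ℂ) :
    Summable fun n : ℕ ↦ ‖p ^ n.choose 2 * (qP p p n)⁻¹ * x ^ n‖ := by
  have hlim : Tendsto (fun n : ℕ ↦ ‖p ^ n * x * (1 - p ^ (n + 1))⁻¹‖) atTop (nhds 0) := by
    have h1 := tendsto_pow_atTop_nhds_zero_of_norm_lt_one hp
    have h2 := (tendsto_const_nhds (x := (1 : ℂ))).sub (h1.comp (tendsto_add_atTop_nat 1))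
    simpa using ((h1.mul_const x).mul (h2.inv₀ (by simp))).norm
  refine summable_of_ratio_norm_eventually_le (r := 1 / 2) (by norm_num) ?_
  filter_upwards [hlim.eventually_le_const (show (0 : ℝ) < 1 / 2 by norm_num)] with n hn
  rw [norm_norm, norm_norm]
  have h1 : 1 - p ^ (n + 1) ≠ 0 := by
    rw [pow_succ']
    exact one_sub_ne_zero_of_norm_lt_one (norm_mul_pow_lt_one hp hp n)
  have h2 := qP_ne_zero hp hp n
  have : p ^ (n + 1).choose 2 * (qP p p (n + 1))⁻¹ * x ^ (n + 1)
      = (p ^ n * x * (1 - p ^ (n + 1))⁻¹) * (p ^ n.choose 2 * (qP p p n)⁻¹ * x ^ n) := by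
    rw [qP_self_succ, Nat.choose_succ_succ' n 1, Nat.choose_one_right]
    field_simp
    ring
  rw [this, norm_mul]
  gcongr

/-- Euler: `(-x;p)_∞ = ∑ p^(n(n-1)/2) xⁿ / (p;p)_n`. -/
lemma hasSum_euler {p : ℂ} (hp : ‖p‖ < 1) (x : ℂ) :
    HasSum (fun n : ℕ ↦ p ^ n.choose 2 * (qP p p n)⁻¹ * x ^ n) (qPInf (-x) p) := by
  have step : ∀ y : ℂ, ∑' n : ℕ, p ^ n.choose 2 * (qP p p n)⁻¹ * y ^ n
      = (1 + y) * ∑' n : ℕ, p ^ n.choose 2 * (qP p p n)⁻¹ * (y * p) ^ n := by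
    intro y
    have s1 := (summable_norm_euler hp y).of_norm
    have s2 := (summable_norm_euler hp (y * p)).of_norm
    have h : ∑' n : ℕ, p ^ n.choose 2 * (qP p p n)⁻¹ * y ^ n
        - ∑' n : ℕ, p ^ n.choose 2 * (qP p p n)⁻¹ * (y * p) ^ n
        = y * ∑' n : ℕ, p ^ n.choose 2 * (qP p p n)⁻¹ * (y * p) ^ n := by
      rw [← s1.tsum_sub s2, (s1.sub s2).tsum_eq_zero_add, ← tsum_mul_left]
      simp only [pow_zero, sub_self, zero_add]
      refine tsum_congr fun n ↦ ?_
      rw [inv_qP_self hp n, Nat.choose_succ_succ' n 1, Nat.choose_one_right]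
      ring
    linear_combination h
  have iter : ∀ n : ℕ, ∑' j : ℕ, p ^ j.choose 2 * (qP p p j)⁻¹ * x ^ j
      = qP (-x) p n * ∑' j : ℕ, p ^ j.choose 2 * (qP p p j)⁻¹ * (x * p ^ n) ^ j := by
    intro n
    induction n with
    | zero => simp [qP]
    | succ n ih => rw [ih, step, qP_succ, pow_succ, ← mul_assoc, ← mul_assoc, neg_mul, sub_neg_eq_add]
  have lim := (tendsto_qP (-x) hp).mul (tendsto_tsum_mul_pow hp (summable_norm_euler hp x))
  simp only [← iter] at lim
  have := tendsto_nhds_unique tendsto_const_nhds lim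
  rw [show qPInf (-x) p = _ from by simpa [qP] using this.symm]
  exact (summable_norm_euler hp x).of_norm.hasSum

/-- The coefficientwise form of `1 / ((p x;p²)_∞ (x;p²)_∞) = 1 / (x;p)_∞`. -/
lemma sum_antidiagonal_inv_qP_sq {p : ℂ} (hp : ‖p‖ < 1) (N : ℕ) :
    ∑ x ∈ Finset.HasAntidiagonal.antidiagonal N,
      p ^ x.1 * (qP (p ^ 2) (p ^ 2) x.1)⁻¹ * (qP (p ^ 2) (p ^ 2) x.2)⁻¹ = (qP p p N)⁻¹ := by
  have hp2 : ‖p ^ 2‖ < 1 := by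
    rw [norm_pow]; exact pow_lt_one₀ (norm_nonneg _) hp two_ne_zero
  let A : PowerSeries ℂ := PowerSeries.mk fun n ↦ (qP (p ^ 2) (p ^ 2) n)⁻¹
  have hA : A - PowerSeries.rescale (p ^ 2) A = PowerSeries.X * A := by
    ext n
    rcases n with _ | n
    · simp only [map_sub, PowerSeries.coeff_rescale]; simp
    · rw [PowerSeries.coeff_succ_X_mul, map_sub, PowerSeries.coeff_rescale]
      simp only [A, PowerSeries.coeff_mk]
      rw [inv_qP_self hp2 n]
      ring
  let G : PowerSeries ℂ := PowerSeries.rescale p A * A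
  have hG : G - PowerSeries.rescale p G = PowerSeries.X * G := by
    have : PowerSeries.rescale p (PowerSeries.rescale p A) = PowerSeries.rescale (p ^ 2) A := by
      rw [PowerSeries.rescale_rescale, sq]
    simp only [G, map_mul, this]
    linear_combination PowerSeries.rescale p A * hA
  have hcoeff : ∀ n, PowerSeries.coeff n G = (qP p p n)⁻¹ := by
    intro n
    induction n with
    | zero => simp [G, A, qP, PowerSeries.coeff_mul, PowerSeries.coeff_rescale,
        -PowerSeries.coeff_zero_eq_constantCoeff]
    | succ n ih =>
      have h := congrArg (PowerSeries.coeff (n + 1)) hG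
      rw [PowerSeries.coeff_succ_X_mul, map_sub, PowerSeries.coeff_rescale, ih,
        inv_qP_self hp n] at h
      have h1 : 1 - p ^ (n + 1) ≠ 0 := by
        rw [pow_succ']
        exact one_sub_ne_zero_of_norm_lt_one (norm_mul_pow_lt_one hp hp n)
      exact mul_right_cancel₀ h1 (by linear_combination h)
  rw [← hcoeff N, PowerSeries.coeff_mul]
  refine Finset.sum_congr rfl fun x _ ↦ ?_
  simp [A, PowerSeries.coeff_rescale]

lemma HasSum.of_forall_eq {α : Type*} {f g : α → ℂ} {a : ℂ} (h : HasSum g a)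
    (hfg : ∀ x, f x = g x) : HasSum f a := by
  rwa [funext hfg]

lemma hasSum_mul_of_summable_norm {α β : Type*} {f : α → ℂ} {g : β → ℂ} {a b : ℂ}
    (hf : Summable fun x ↦ ‖f x‖) (hg : Summable fun x ↦ ‖g x‖) (ha : HasSum f a)
    (hb : HasSum g b) : HasSum (fun x : α × β ↦ f x.1 * g x.2) (a * b) :=
  ha.mul hb (summable_mul_of_summable_norm hf hg)

lemma norm_sq_lt_one {q : ℂ} (hq : ‖q‖ < 1) : ‖q ^ 2‖ < 1 := by
  rw [norm_pow]
  exact pow_lt_one₀ (norm_nonneg _) hq two_ne_zero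

lemma two_mul_choose_two_add (n : ℕ) : 2 * n.choose 2 + n = n ^ 2 := by
  induction n with
  | zero => rfl
  | succ n ih => rw [Nat.choose_succ_succ' n 1, Nat.choose_one_right]; linarith

lemma hasSum_euler_sq {q : ℂ} (hq : ‖q‖ < 1) :
    HasSum (fun n : ℕ ↦ q ^ n ^ 2 * (qP (q ^ 2) (q ^ 2) n)⁻¹) (qPInf (-q) (q ^ 2)) := by
  convert hasSum_euler (norm_sq_lt_one hq) q using 2 with n
  rw [← two_mul_choose_two_add, pow_add, pow_mul]
  ring

lemma summable_norm_zpow_sq {q : ℂ} (hq : ‖q‖ < 1) : Summable fun m : ℤ ↦ ‖q ^ m ^ 2‖ := by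
  have h : Summable fun n : ℕ ↦ ‖q ^ (n : ℤ) ^ 2‖ := by
    refine Summable.of_nonneg_of_le (fun _ ↦ norm_nonneg _) (fun n ↦ ?_)
      (summable_geometric_of_lt_one (norm_nonneg q) hq)
    rw [← Nat.cast_pow, zpow_natCast, norm_pow]
    exact pow_le_pow_of_le_one (norm_nonneg _) hq.le (Nat.le_self_pow two_ne_zero n)
  refine Summable.of_nat_of_neg h ?_
  simpa using h

lemma qPInf_zpow_eq_zero {p : ℂ} (hp0 : p ≠ 0) (hp : ‖p‖ < 1) (n : ℕ) :
    qPInf (p ^ (-(n : ℤ))) p = 0 := by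
  rw [qPInf_eq_qP_mul _ hp (n + 1), qP_succ, zpow_neg, zpow_natCast,
    inv_mul_cancel₀ (pow_ne_zero n hp0)]
  simp

/-- Jacobi's product formula for `∑ q^(m²)`. -/
lemma hasSum_zpow_sq {q : ℂ} (hq0 : q ≠ 0) (hq : ‖q‖ < 1) :
    HasSum (fun m : ℤ ↦ q ^ m ^ 2) (qPInf (q ^ 2) (q ^ 2) * qPInf (-q) (q ^ 2) ^ 2) := by
  have hp := norm_sq_lt_one hq
  have hnq : ‖-q‖ < 1 := by rwa [norm_neg]
  have hA1 := qPInf_mul_tsum_euler_inv hp hnq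
  have sθ := summable_norm_zpow_sq hq
  have sA := summable_norm_euler_inv hp hnq
  have hprod := hasSum_mul_of_summable_norm sθ sA sθ.of_norm.hasSum sA.of_norm.hasSum
  generalize ∑' k : ℕ, (qP (q ^ 2) (q ^ 2) k)⁻¹ * (-q) ^ k = A at hA1 hprod
  let e : ℤ × ℕ ≃ ℤ × ℕ :=
    { toFun := fun x ↦ (x.1 + x.2, x.2)
      invFun := fun x ↦ (x.1 - x.2, x.2)
      left_inv := fun x ↦ by simp
      right_inv := fun x ↦ by simp }
  have hfib := (e.hasSum_iff.2 hprod).prod_fiberwise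
    (g := fun n : ℤ ↦ q ^ n ^ 2 * qPInf ((q ^ 2) ^ (n + 1)) (q ^ 2)) (by
      intro n
      have := (hasSum_euler hp (-(q ^ 2) ^ (n + 1))).mul_left (q ^ n ^ 2)
      rw [neg_neg] at this
      refine this.of_forall_eq fun k ↦ ?_
      have hk : (2 * k.choose 2 : ℤ) + k = k ^ 2 := by exact_mod_cast two_mul_choose_two_add k
      have : q ^ (n + k) ^ 2 * q ^ k
          = q ^ n ^ 2 * ((q ^ 2) ^ k.choose 2 * ((q ^ 2) ^ (n + 1)) ^ k) := by
        simp only [← zpow_natCast, ← zpow_mul, ← zpow_add₀ hq0]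
        congr 1
        push_cast
        linear_combination -hk
      simp only [Function.comp, e, Equiv.coe_fn_mk]
      rw [neg_pow q, neg_pow ((q ^ 2) ^ (n + 1))]
      linear_combination (qP (q ^ 2) (q ^ 2) k)⁻¹ * (-1) ^ k * this)
  have hnat : HasSum (fun n : ℤ ↦ q ^ n ^ 2 * qPInf ((q ^ 2) ^ (n + 1)) (q ^ 2))
      (qPInf (q ^ 2) (q ^ 2) * qPInf (-q) (q ^ 2) + 0) := by
    refine HasSum.of_nat_of_neg_add_one ?_ ?_
    · refine ((hasSum_euler_sq hq).mul_left (qPInf (q ^ 2) (q ^ 2))).of_forall_eq fun n ↦ ?_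
      have h1 := qP_ne_zero hp hp n
      rw [qPInf_eq_qP_mul (q ^ 2) hp n, ← pow_succ']
      norm_cast
      field_simp
    · refine hasSum_zero.of_forall_eq fun n ↦ ?_
      rw [show -((n : ℤ) + 1) + 1 = -n by ring, qPInf_zpow_eq_zero (pow_ne_zero 2 hq0) hp, mul_zero]
  have huniq := hfib.unique hnat
  have : ∑' m : ℤ, q ^ m ^ 2 = qPInf (q ^ 2) (q ^ 2) * qPInf (-q) (q ^ 2) ^ 2 := by
    linear_combination qPInf (-q) (q ^ 2) * huniq - (∑' m : ℤ, q ^ m ^ 2) * hA1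
  rw [← this]
  exact sθ.of_norm.hasSum

lemma summable_norm_euler_double {q : ℂ} (hq : ‖q‖ < 1) :
    Summable fun x : ℕ × ℕ ↦ ‖q ^ ((x.1 + x.2) ^ 2 + 2 * x.1) *
      ((qP ((q ^ 2) ^ 2) ((q ^ 2) ^ 2) x.1)⁻¹ * (qP ((q ^ 2) ^ 2) ((q ^ 2) ^ 2) x.2)⁻¹)‖ := by
  have hp := norm_sq_lt_one (norm_sq_lt_one hq)
  obtain ⟨C, hC⟩ := exists_norm_inv_qP_le hp hp
  have hC0 : 0 ≤ C := (norm_nonneg _).trans (hC 0)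
  have hg := summable_geometric_of_lt_one (norm_nonneg q) hq
  refine Summable.of_nonneg_of_le (fun _ ↦ norm_nonneg _) (fun x ↦ ?_)
    ((hg.mul_of_nonneg hg (fun _ ↦ by positivity) (fun _ ↦ by positivity)).mul_right (C * C))
  rw [norm_mul, norm_mul, norm_pow, ← pow_add]
  gcongr ?_ * (?_ * ?_)
  · exact pow_le_pow_of_le_one (norm_nonneg _) hq.le
      ((Nat.le_self_pow two_ne_zero _).trans (Nat.le_add_right _ _))
  · exact hC _
  · exact hC _

lemma hasSum_euler_double {q : ℂ} (hq : ‖q‖ < 1) :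
    HasSum (fun x : ℕ × ℕ ↦ q ^ ((x.1 + x.2) ^ 2 + 2 * x.1) *
      ((qP ((q ^ 2) ^ 2) ((q ^ 2) ^ 2) x.1)⁻¹ * (qP ((q ^ 2) ^ 2) ((q ^ 2) ^ 2) x.2)⁻¹))
      (qPInf (-q) (q ^ 2)) := by
  have hs := (summable_norm_euler_double hq).of_norm.hasSum
  have h := (Finset.HasAntidiagonal.sigmaAntidiagonalEquivProd.hasSum_iff.2 hs).sigma
    (g := fun N : ℕ ↦ q ^ N ^ 2 * (qP (q ^ 2) (q ^ 2) N)⁻¹) (by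
      intro N
      convert hasSum_fintype _ using 1
      rw [← sum_antidiagonal_inv_qP_sq (norm_sq_lt_one hq) N, Finset.mul_sum,
        ← Finset.sum_coe_sort]
      refine Finset.sum_congr rfl fun x _ ↦ ?_
      have hx := Finset.HasAntidiagonal.mem_antidiagonal.1 x.2
      simp only [Function.comp, Finset.HasAntidiagonal.sigmaAntidiagonalEquivProd_apply, hx,
        pow_add, pow_mul]
      ring)
  rw [h.unique (hasSum_euler_sq hq)] at hs
  exact hs

lemma hasSum_theta_mul {q : ℂ} (hq0 : q ≠ 0) (hq : ‖q‖ < 1) :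
    HasSum (fun x : ℤ × ℕ × ℕ ↦ q ^ x.1 ^ 2 * (q ^ ((x.2.1 + x.2.2) ^ 2 + 2 * x.2.1) *
      ((qP ((q ^ 2) ^ 2) ((q ^ 2) ^ 2) x.2.1)⁻¹ * (qP ((q ^ 2) ^ 2) ((q ^ 2) ^ 2) x.2.2)⁻¹)))
      (qPInf (q ^ 2) (q ^ 2) * qPInf (-q) (q ^ 2) ^ 3) := by
  have h := hasSum_mul_of_summable_norm (summable_norm_zpow_sq hq) (summable_norm_euler_double hq)
    (hasSum_zpow_sq hq0 hq) (hasSum_euler_double hq)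
  rwa [mul_assoc, ← pow_succ] at h

lemma zpow_mul_pow_eq {q : ℂ} (hq0 : q ≠ 0) (n : ℤ) (j k : ℕ) :
    q ^ (2 * n + j - k) ^ 2 * q ^ ((j + k) ^ 2 + 2 * j) =
      (q ^ 2) ^ (2 * n ^ 2) * ((((q ^ 2) ^ 2) ^ j.choose 2 * ((q ^ 2) ^ (2 * n + 2)) ^ j) *
        (((q ^ 2) ^ 2) ^ k.choose 2 * ((q ^ 2) ^ (1 - 2 * n)) ^ k)) := by
  have hj : (2 * j.choose 2 : ℤ) + j = j ^ 2 := by exact_mod_cast two_mul_choose_two_add j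
  have hk : (2 * k.choose 2 : ℤ) + k = k ^ 2 := by exact_mod_cast two_mul_choose_two_add k
  simp only [← zpow_natCast, ← zpow_mul, ← zpow_add₀ hq0]
  congr 1
  push_cast
  linear_combination -2 * hj - 2 * hk

/-- The bilateral series as the even part of a theta quotient. -/
lemma hasSum_bilateral {q : ℂ} (hq0 : q ≠ 0) (hq : ‖q‖ < 1) :
    HasSum (fun n : ℤ ↦ (q ^ 2) ^ (2 * n ^ 2) * (qPInf (-(q ^ 2) ^ (2 * n + 2)) ((q ^ 2) ^ 2) *
        qPInf (-(q ^ 2) ^ (1 - 2 * n)) ((q ^ 2) ^ 2)))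
      (qPInf (q ^ 2) (q ^ 2) * (qPInf q (q ^ 2) ^ 3 + qPInf (-q) (q ^ 2) ^ 3) / 2) := by
  have hp := norm_sq_lt_one (norm_sq_lt_one hq)
  have h1 := hasSum_theta_mul hq0 hq
  have h2 := hasSum_theta_mul (neg_ne_zero.2 hq0) (by rwa [norm_neg])
  rw [neg_sq, neg_neg] at h2
  have h3 := (h2.add h1).div_const 2
  rw [← mul_add] at h3
  let ι : ℤ × ℕ × ℕ → ℤ × ℕ × ℕ := fun x ↦ (2 * x.1 + x.2.1 - x.2.2, x.2)
  have hι : Function.Injective ι := by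
    rintro ⟨n, j, k⟩ ⟨n', j', k'⟩ h
    simp only [ι, Prod.mk.injEq] at h ⊢
    omega
  have hparity : ∀ (m : ℤ) (j k : ℕ), (-q) ^ m ^ 2 * (-q) ^ ((j + k) ^ 2 + 2 * j)
      = (-1) ^ (m + j - k) * (q ^ m ^ 2 * q ^ ((j + k) ^ 2 + 2 * j)) := by
    intro m j k
    have he : Even (m ^ 2 + ((j + k) ^ 2 + 2 * j : ℤ) - (m + j - k)) := by
      simp [Int.even_add, Int.even_sub, Int.even_pow]
      tauto
    have : (-1 : ℂ) ^ (m ^ 2) * (-1) ^ ((j + k) ^ 2 + 2 * j) = (-1) ^ (m + j - k) := by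
      rw [← zpow_natCast, ← zpow_add₀ (by norm_num)]
      push_cast
      have h := he.neg_one_zpow (α := ℂ)
      rw [zpow_sub₀ (by norm_num)] at h
      exact eq_of_div_eq_one h
    rw [neg_eq_neg_one_mul, mul_zpow, mul_pow, ← this]
    ring
  have h4 := (hι.hasSum_iff (fun x hx ↦ ?_)).2 h3
  · refine h4.prod_fiberwise fun n ↦ ?_
    have hE := (hasSum_mul_of_summable_norm (summable_norm_euler hp _) (summable_norm_euler hp _)
      (hasSum_euler hp ((q ^ 2) ^ (2 * n + 2)))
      (hasSum_euler hp ((q ^ 2) ^ (1 - 2 * n)))).mul_left ((q ^ 2) ^ (2 * n ^ 2))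
    refine hE.of_forall_eq fun x ↦ ?_
    obtain ⟨j, k⟩ := x
    have hm := zpow_mul_pow_eq hq0 n j k
    have hs : (-1 : ℂ) ^ (2 * n + j - k + j - k) = 1 := by
      refine Even.neg_one_zpow ⟨n + j - k, by ring⟩
    have hn := hparity (2 * n + j - k) j k
    rw [hs, one_mul] at hn
    simp only [Function.comp, ι]
    linear_combination (qP ((q ^ 2) ^ 2) ((q ^ 2) ^ 2) j)⁻¹ *
      (qP ((q ^ 2) ^ 2) ((q ^ 2) ^ 2) k)⁻¹ * (hm + hn / 2)
  · obtain ⟨m, j, k⟩ := x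
    have hodd : Odd (m + j - k) := by
      by_contra hne
      rw [Int.not_odd_iff_even] at hne
      obtain ⟨a, ha⟩ := hne
      exact hx ⟨(a - j + k, j, k), by simp only [ι, Prod.mk.injEq, and_true]; omega⟩
    have hn := hparity m j k
    rw [hodd.neg_one_zpow] at hn
    simp only
    linear_combination (qP ((q ^ 2) ^ 2) ((q ^ 2) ^ 2) j)⁻¹ *
      (qP ((q ^ 2) ^ 2) ((q ^ 2) ^ 2) k)⁻¹ / 2 * hn

lemma qPInf_sq_mul (a : ℂ) {p : ℂ} (hp : ‖p‖ < 1) :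
    qPInf a (p ^ 2) * qPInf (a * p) (p ^ 2) = qPInf a p := by
  have hp2 := norm_sq_lt_one hp
  have he : (fun n : ℕ ↦ 1 - a * p ^ (2 * n)) = fun n ↦ 1 - a * (p ^ 2) ^ n := by
    ext n; rw [pow_mul]
  have ho : (fun n : ℕ ↦ 1 - a * p ^ (2 * n + 1)) = fun n ↦ 1 - a * p * (p ^ 2) ^ n := by
    ext n; rw [pow_succ', pow_mul, mul_assoc]
  rw [qPInf, qPInf, qPInf, ← he, ← ho]
  exact tprod_even_mul_odd (f := fun n : ℕ ↦ 1 - a * p ^ n)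
    (by rw [he]; exact multipliable_qPInf a hp2) (by rw [ho]; exact multipliable_qPInf _ hp2)

lemma qPInf_neg_zpow_odd {p : ℂ} (hp0 : p ≠ 0) (hp : ‖p‖ < 1) (n : ℕ) :
    qPInf (-p ^ (1 - 2 * n : ℤ)) (p ^ 2) * p ^ n ^ 2 =
      qPInf (-p) (p ^ 2) * qP (-p) (p ^ 2) n := by
  induction n with
  | zero => simp [qP]
  | succ n ih =>
    have h1 : p ^ (1 - 2 * (n + 1 : ℕ) : ℤ) * p ^ 2 = p ^ (1 - 2 * n : ℤ) := by
      rw [← zpow_natCast p 2, ← zpow_add₀ hp0]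
      congr 1
      push_cast
      ring
    have h2 : p ^ (1 - 2 * (n + 1 : ℕ) : ℤ) * p ^ (2 * n + 1) = 1 := by
      rw [← zpow_natCast p (2 * n + 1), ← zpow_add₀ hp0, ← zpow_zero p]
      congr 1
      push_cast
      ring
    rw [qPInf_eq_mul _ (norm_sq_lt_one hp), neg_mul, h1, qP_succ,
      ← mul_assoc, ← ih]
    linear_combination qPInf (-p ^ (1 - 2 * n : ℤ)) (p ^ 2) * p ^ n ^ 2 * h2

lemma qPInf_neg_zpow_even {p : ℂ} (hp0 : p ≠ 0) (hp : ‖p‖ < 1) (n : ℕ) :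
    qPInf (-p ^ (-2 * n : ℤ)) (p ^ 2) * p ^ (n ^ 2 + n) =
      2 * qPInf (-p ^ 2) (p ^ 2) * qP (-p ^ 2) (p ^ 2) n := by
  induction n with
  | zero =>
    simp [qP, qPInf_eq_mul (-1) (norm_sq_lt_one hp)]
    norm_num
  | succ n ih =>
    have h1 : p ^ (-2 * (n + 1 : ℕ) : ℤ) * p ^ 2 = p ^ (-2 * n : ℤ) := by
      rw [← zpow_natCast p 2, ← zpow_add₀ hp0]
      congr 1
      push_cast
      ring
    have h2 : p ^ (-2 * (n + 1 : ℕ) : ℤ) * p ^ (2 * n + 2) = 1 := by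
      rw [← zpow_natCast p (2 * n + 2), ← zpow_add₀ hp0, ← zpow_zero p]
      congr 1
      push_cast
      ring
    rw [qPInf_eq_mul _ (norm_sq_lt_one hp), neg_mul (p ^ (-2 * (n + 1 : ℕ) : ℤ)), h1, qP_succ,
      ← mul_assoc, ← ih]
    linear_combination qPInf (-p ^ (-2 * n : ℤ)) (p ^ 2) * p ^ (n ^ 2 + n) * h2

/-- The general term of the mock theta function `T₀(q²)`, which completes `S₀(q²)` to a
bilateral series. -/
noncomputable def T0Term (q : ℂ) (n : ℕ) : ℂ :=
  (∏ j ∈ Finset.range n, (1 + q ^ (4 * j + 4))) /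
    (∏ j ∈ Finset.range (n + 1), (1 + q ^ (4 * j + 2))) * q ^ (2 * n ^ 2 + 6 * n + 4)

lemma T0Term_eq (q : ℂ) (n : ℕ) :
    T0Term q n = qP (-(q ^ 2) ^ 2) ((q ^ 2) ^ 2) n / qP (-q ^ 2) ((q ^ 2) ^ 2) (n + 1) *
      (q ^ 2) ^ (n ^ 2 + 3 * n + 2) := by
  rw [T0Term, qP, qP]
  congr 1
  · congr 1 <;> refine Finset.prod_congr rfl fun i _ ↦ ?_ <;> ring
  · ring

/-- The completion of `S₀(q²)` by `T₀(q²)` is a theta quotient. -/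
lemma S0_sub_theta {q : ℂ} (hq0 : q ≠ 0) (hq : ‖q‖ < 1) :
    S0 (q ^ 2) - qPInf (q ^ 2) (q ^ 2) * (qPInf q (q ^ 2) ^ 3 + qPInf (-q) (q ^ 2) ^ 3) /
      (2 * qPInf (-q ^ 2) (q ^ 2)) = -2 * ∑' n, T0Term q n := by
  have hQ0 : q ^ 2 ≠ 0 := pow_ne_zero 2 hq0
  have hQ := norm_sq_lt_one hq
  have hQ2 := norm_sq_lt_one hQ
  have h := hasSum_bilateral hq0 hq
  have hsplit := qPInf_sq_mul (-q ^ 2) hQ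
  rw [show -q ^ 2 * q ^ 2 = -(q ^ 2) ^ 2 by ring] at hsplit
  have hnQ : ‖-q ^ 2‖ < 1 := by rwa [norm_neg]
  have hnQ2 : ‖-(q ^ 2) ^ 2‖ < 1 := by rwa [norm_neg]
  have hK := qPInf_ne_zero hnQ hQ
  generalize qPInf (q ^ 2) (q ^ 2) * (qPInf q (q ^ 2) ^ 3 + qPInf (-q) (q ^ 2) ^ 3) = Θ at h ⊢
  rw [S0]
  simp only [T0Term_eq]
  generalize q ^ 2 = p at *
  have hnat : ∀ n : ℕ, p ^ (2 * (n : ℤ) ^ 2) * (qPInf (-p ^ (2 * (n : ℤ) + 2)) (p ^ 2) *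
      qPInf (-p ^ (1 - 2 * (n : ℤ))) (p ^ 2)) =
      qPInf (-p) p * (p ^ n ^ 2 * qP (-p) (p ^ 2) n / qP (-p ^ 2) (p ^ 2) n) := by
    intro n
    have h1 := qPInf_neg_zpow_odd hQ0 hQ n
    have h2 := qPInf_eq_qP_mul (-p ^ 2) hQ2 n
    have h3 := qP_ne_zero hnQ2 hQ2 n
    have h4 : -p ^ (2 * (n : ℤ) + 2) = -p ^ 2 * (p ^ 2) ^ n := by
      rw [← pow_mul, neg_mul, ← pow_add, ← zpow_natCast]
      congr 2
      push_cast
      ring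
    have h5 : p ^ (2 * (n : ℤ) ^ 2) = p ^ n ^ 2 * p ^ n ^ 2 := by
      rw [← pow_add, ← zpow_natCast]
      congr 1
      push_cast
      ring
    rw [h4, h5, ← hsplit, h2]
    field_simp
    linear_combination qPInf (-(p ^ 2 * (p ^ 2) ^ n)) (p ^ 2) * h1
  have hneg : ∀ n : ℕ, p ^ (2 * (-((n : ℤ) + 1)) ^ 2) *
      (qPInf (-p ^ (2 * (-((n : ℤ) + 1)) + 2)) (p ^ 2) *
        qPInf (-p ^ (1 - 2 * (-((n : ℤ) + 1)))) (p ^ 2)) =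
      qPInf (-p) p * 2 * (qP (-p ^ 2) (p ^ 2) n / qP (-p) (p ^ 2) (n + 1) *
        p ^ (n ^ 2 + 3 * n + 2)) := by
    intro n
    have h1 := qPInf_neg_zpow_even hQ0 hQ n
    have h2 := qPInf_eq_qP_mul (-p) hQ2 (n + 1)
    have h3 := qP_ne_zero hnQ hQ2 (n + 1)
    have h4 : -p ^ (1 - 2 * (-((n : ℤ) + 1))) = -p * (p ^ 2) ^ (n + 1) := by
      rw [← pow_mul, neg_mul, ← pow_succ', ← zpow_natCast]
      congr 2
      push_cast
      ring
    have h5 : p ^ (2 * (-((n : ℤ) + 1)) ^ 2) = p ^ (n ^ 2 + n) * p ^ (n ^ 2 + 3 * n + 2) := by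
      rw [← pow_add, ← zpow_natCast]
      congr 1
      push_cast
      ring
    rw [h4, h5, show 2 * (-((n : ℤ) + 1)) + 2 = -2 * n by ring, ← hsplit, h2]
    field_simp
    linear_combination qPInf (-(p * (p ^ 2) ^ (n + 1))) (p ^ 2) * h1
  have s1 := h.summable.comp_injective Nat.cast_injective
  have s2 := h.summable.comp_injective (i := fun n : ℕ ↦ -((n : ℤ) + 1))
    (fun a b hab ↦ by simpa using hab)
  have hu := h.unique (s1.hasSum.of_nat_of_neg_add_one s2.hasSum)
  simp only [Function.comp_def, hnat, hneg, tsum_mul_left] at hu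
  rw [← div_div, hu, mul_assoc, ← mul_add, mul_div_cancel_left₀ _ hK]
  ring

/-- The factor relating terms of `T₀(q²)` at distance `2k`, as a function of `q` and `z = q^(4n)`. -/
noncomputable def T0Ratio (k : ℕ) (q z : ℂ) : ℂ :=
  z ^ (2 * k) * q ^ (8 * k ^ 2 + 12 * k) *
    ((∏ i ∈ Finset.range (2 * k), (1 + z * q ^ (4 * i + 4))) /
      ∏ i ∈ Finset.range (2 * k), (1 + z * q ^ (4 * i + 6)))

lemma T0Term_add (k : ℕ) (q : ℂ) (n : ℕ) :
    T0Term q (n + 2 * k) = T0Ratio k q (q ^ (4 * n)) * T0Term q n := by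
  have h1 : ∏ i ∈ Finset.range (2 * k), (1 + q ^ (4 * (n + i) + 4))
      = ∏ i ∈ Finset.range (2 * k), (1 + q ^ (4 * n) * q ^ (4 * i + 4)) :=
    Finset.prod_congr rfl fun i _ ↦ by ring
  have h2 : ∏ i ∈ Finset.range (2 * k), (1 + q ^ (4 * (n + 1 + i) + 2))
      = ∏ i ∈ Finset.range (2 * k), (1 + q ^ (4 * n) * q ^ (4 * i + 6)) :=
    Finset.prod_congr rfl fun i _ ↦ by ring
  rw [T0Term, T0Term, T0Ratio, add_right_comm n, Finset.prod_range_add,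
    Finset.prod_range_add _ (n + 1), h1, h2, ← div_mul_div_comm]
  ring

section RootOfUnity

variable {k : ℕ} {ζ : ℂ}

lemma pow_four_mul_eq_neg_one (hk : 0 < k) (hζ : IsPrimitiveRoot ζ (8 * k)) :
    ζ ^ (4 * k) = -1 := by
  have h1 : (ζ ^ (4 * k)) ^ 2 = 1 := by
    rw [← pow_mul, ← hζ.pow_eq_one]
    ring
  exact (mul_self_eq_one_iff.1 (by rw [← sq, h1])).resolve_left
    (hζ.pow_ne_one_of_pos_of_lt (by omega) (by omega))

lemma one_add_pow_ne_zero (hζ : IsPrimitiveRoot ζ (8 * k)) (j : ℕ) :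
    1 + ζ ^ (4 * j + 2) ≠ 0 := by
  intro h
  have h1 : ζ ^ (8 * j + 4) = 1 := by
    rw [show 8 * j + 4 = (4 * j + 2) * 2 by ring, pow_mul, eq_neg_of_add_eq_zero_right h]
    norm_num
  have := (Dvd.intro k rfl : 8 ∣ 8 * k).trans (hζ.dvd_of_pow_eq_one _ h1)
  omega

lemma prod_one_add_mul_pow (hk : 0 < k) (hζ : IsPrimitiveRoot ζ (8 * k)) (w : ℂ) :
    ∏ i ∈ Finset.range (2 * k), (1 + w * ζ ^ (4 * i)) = 1 - w ^ (2 * k) := by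
  have h4 : IsPrimitiveRoot (ζ ^ 4) (2 * k) :=
    hζ.pow (by omega) (by ring)
  have h := congrArg (Polynomial.eval 1)
    (X_pow_sub_C_eq_prod h4 (α := -w) (by omega : 0 < 2 * k) rfl)
  rw [Polynomial.eval_prod] at h
  simp only [Polynomial.eval_sub, Polynomial.eval_pow, Polynomial.eval_X, Polynomial.eval_C,
    one_pow, (even_two_mul k).neg_pow] at h
  rw [h]
  exact Finset.prod_congr rfl fun i _ ↦ by ring

lemma continuousAt_T0Term (hζ : IsPrimitiveRoot ζ (8 * k)) (n : ℕ) :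
    ContinuousAt (fun q ↦ T0Term q n) ζ := by
  unfold T0Term
  refine ContinuousAt.mul (ContinuousAt.div (by fun_prop) (by fun_prop) ?_) (by fun_prop)
  exact Finset.prod_ne_zero_iff.2 fun j _ ↦ one_add_pow_ne_zero hζ j

lemma T0Term_eq_zero (hk : 0 < k) (hζ : IsPrimitiveRoot ζ (8 * k)) {n : ℕ} (hn : k ≤ n) :
    T0Term ζ n = 0 := by
  have : ∏ j ∈ Finset.range n, (1 + ζ ^ (4 * j + 4)) = 0 := by
    refine Finset.prod_eq_zero (i := k - 1) (Finset.mem_range.2 (by omega)) ?_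
    rw [show 4 * (k - 1) + 4 = 4 * k by omega, pow_four_mul_eq_neg_one hk hζ]
    ring
  rw [T0Term, this]
  simp

lemma eventually_norm_T0Ratio_lt (hk : 0 < k) (hζ : IsPrimitiveRoot ζ (8 * k)) :
    ∀ᶠ q in nhds ζ, ∀ z ∈ Metric.closedBall (0 : ℂ) 1 ∩
      (fun z ↦ z ^ (2 * k)) ⁻¹' (Complex.ofReal '' Set.Icc 0 1), ‖T0Ratio k q z‖ < 1 / 2 := by
  have hclosed : IsClosed (Complex.ofReal '' Set.Icc 0 1) :=
    (isCompact_Icc.image Complex.continuous_ofReal).isClosed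
  refine IsCompact.eventually_forall_of_forall_eventually
    ((isCompact_closedBall 0 1).inter_right (hclosed.preimage (by fun_prop))) fun z hz ↦ ?_
  obtain ⟨Y, ⟨hY0, hY1⟩, hY⟩ := hz.2
  replace hY : (Y : ℂ) = z ^ (2 * k) := hY
  have hζ4 := pow_four_mul_eq_neg_one hk hζ
  have hnum : ∏ i ∈ Finset.range (2 * k), (1 + z * ζ ^ (4 * i + 4)) = ((1 - Y : ℝ) : ℂ) := by
    have h := prod_one_add_mul_pow hk hζ (z * ζ ^ 4)
    rw [mul_pow, ← pow_mul, show 4 * (2 * k) = 8 * k by ring, hζ.pow_eq_one, mul_one, ← hY] at h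
    rw [Complex.ofReal_sub, Complex.ofReal_one, ← h]
    exact Finset.prod_congr rfl fun i _ ↦ by ring
  have hden : ∏ i ∈ Finset.range (2 * k), (1 + z * ζ ^ (4 * i + 6)) = ((1 + Y : ℝ) : ℂ) := by
    have h := prod_one_add_mul_pow hk hζ (z * ζ ^ 6)
    rw [mul_pow, ← pow_mul, show 6 * (2 * k) = 8 * k + 4 * k by ring, pow_add, hζ.pow_eq_one,
      hζ4, ← hY] at h
    rw [Complex.ofReal_add, Complex.ofReal_one, show (1 : ℂ) + Y = 1 - Y * (1 * -1) by ring, ← h]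
    exact Finset.prod_congr rfl fun i _ ↦ by ring
  have hcont : ContinuousAt (fun x : ℂ × ℂ ↦ ‖T0Ratio k x.1 x.2‖) (ζ, z) := by
    unfold T0Ratio
    refine ContinuousAt.norm (ContinuousAt.mul (by fun_prop)
      (ContinuousAt.div (by fun_prop) (by fun_prop) ?_))
    rw [hden]
    exact_mod_cast (by positivity : 1 + Y ≠ 0)
  refine hcont.eventually_lt_const ?_
  have hζ1 : ‖ζ‖ = 1 := hζ.norm'_eq_one (by omega)
  have h0 : 0 ≤ 1 - Y := by linarith
  change ‖T0Ratio k ζ z‖ < 1 / 2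
  rw [T0Ratio, hnum, hden, show z ^ (2 * k) = Y from hY.symm, norm_mul, norm_mul, norm_div,
    norm_pow, hζ1, one_pow, mul_one, Complex.norm_of_nonneg hY0, Complex.norm_of_nonneg h0,
    Complex.norm_of_nonneg (by positivity), ← mul_div_assoc, div_lt_iff₀ (by positivity)]
  nlinarith [sq_nonneg (Y - 1 / 2)]

lemma tendsto_tsum_T0Term (hk : 0 < k) (hζ : IsPrimitiveRoot ζ (8 * k)) :
    Tendsto (fun t : ℝ ↦ ∑' n, T0Term (t * ζ) n) (nhdsWithin 1 (Set.Ioo (0 : ℝ) 1))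
      (nhds (∑ n ∈ Finset.range k, T0Term ζ n)) := by
  have hsum : ∑' n, T0Term ζ n = ∑ n ∈ Finset.range k, T0Term ζ n :=
    tsum_eq_sum fun n hn ↦ T0Term_eq_zero hk hζ (by simpa using hn)
  rw [← hsum]
  have hζ1 : ‖ζ‖ = 1 := hζ.norm'_eq_one (by omega)
  have hrad : Tendsto (fun t : ℝ ↦ (t : ℂ) * ζ) (nhdsWithin 1 (Set.Ioo (0 : ℝ) 1)) (nhds ζ) := by
    have : Continuous fun t : ℝ ↦ (t : ℂ) * ζ := by fun_prop
    simpa using (this.tendsto 1).mono_left nhdsWithin_le_nhds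
  have hterm (n : ℕ) := (continuousAt_T0Term hζ n).tendsto.comp hrad
  obtain ⟨ρ, hρ0, hρ1, hρ⟩ : ∃ ρ : ℝ, 0 < ρ ∧ ρ < 1 ∧ ρ ^ (2 * k) = 1 / 2 := by
    refine ⟨(1 / 2 : ℝ) ^ (((2 * k : ℕ) : ℝ)⁻¹), by positivity, ?_, ?_⟩
    · exact Real.rpow_lt_one (by norm_num) (by norm_num) (by positivity)
    · exact Real.rpow_inv_natCast_pow (by norm_num) (by omega)
  set M : ℝ := 2 * ∑ b ∈ Finset.range (2 * k), (‖T0Term ζ b‖ + 1) with hM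
  refine tendsto_tsum_of_dominated_convergence (bound := fun n ↦ M * ρ ^ n)
    ((summable_geometric_of_lt_one hρ0.le hρ1).mul_left M) hterm ?_
  have hinit : ∀ᶠ t : ℝ in nhdsWithin 1 (Set.Ioo (0 : ℝ) 1),
      ∀ b ∈ Finset.range (2 * k), ‖T0Term (t * ζ) b‖ < ‖T0Term ζ b‖ + 1 :=
    (Finset.eventually_all _).2 fun b _ ↦ (hterm b).norm.eventually_lt_const (by simp)
  filter_upwards [hinit, hrad.eventually (eventually_norm_T0Ratio_lt hk hζ),
    self_mem_nhdsWithin] with t ht hratio htI n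
  induction n using Nat.strong_induction_on with
  | _ n ih =>
    rcases lt_or_ge n (2 * k) with hn | hn
    · have h1 : ‖T0Term ζ n‖ + 1 ≤ ∑ b ∈ Finset.range (2 * k), (‖T0Term ζ b‖ + 1) :=
        Finset.single_le_sum (f := fun b ↦ ‖T0Term ζ b‖ + 1) (fun _ _ ↦ by positivity)
          (Finset.mem_range.2 hn)
      have h2 : 1 / 2 ≤ ρ ^ n := hρ ▸ pow_le_pow_of_le_one hρ0.le hρ1.le hn.le
      have h3 := ht n (Finset.mem_range.2 hn)
      have h4 : 0 ≤ M := by positivity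
      nlinarith [mul_le_mul_of_nonneg_left h2 h4]
    · obtain ⟨m, rfl⟩ := Nat.exists_eq_add_of_le' hn
      have hz : ((t : ℂ) * ζ) ^ (4 * m) ∈ Metric.closedBall (0 : ℂ) 1 ∩
          (fun z ↦ z ^ (2 * k)) ⁻¹' (Complex.ofReal '' Set.Icc 0 1) := by
        refine ⟨?_, t ^ (8 * k * m), ⟨pow_nonneg htI.1.le _, pow_le_one₀ htI.1.le htI.2.le⟩, ?_⟩
        · rw [mem_closedBall_zero_iff, norm_pow, norm_mul, hζ1, mul_one,
            Complex.norm_of_nonneg htI.1.le]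
          exact pow_le_one₀ htI.1.le htI.2.le
        · change _ = (((t : ℂ) * ζ) ^ (4 * m)) ^ (2 * k)
          rw [← pow_mul, show 4 * m * (2 * k) = 8 * k * m by ring, mul_pow, pow_mul ζ,
            hζ.pow_eq_one, one_pow, mul_one, Complex.ofReal_pow]
      rw [T0Term_add, norm_mul, pow_add, hρ]
      calc _ ≤ 1 / 2 * (M * ρ ^ m) := by
            gcongr
            · exact (hratio _ hz).le
            · exact ih m (by omega)
        _ = _ := by ring

end RootOfUnity

theorem stmt19 (k : ℕ) (hk : 0 < k) (ζ : ℂ) (hζ : IsPrimitiveRoot ζ (8 * k)) :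
    Tendsto (fun t : ℝ =>
        S0 (((t : ℂ) * ζ) ^ 2) -
          qPInf (((t : ℂ) * ζ) ^ 2) (((t : ℂ) * ζ) ^ 2) *
              (qPInf ((t : ℂ) * ζ) (((t : ℂ) * ζ) ^ 2) ^ 3 +
                qPInf (-((t : ℂ) * ζ)) (((t : ℂ) * ζ) ^ 2) ^ 3) /
            (2 * qPInf (-((t : ℂ) * ζ) ^ 2) (((t : ℂ) * ζ) ^ 2)))
      (nhdsWithin 1 (Set.Ioo (0 : ℝ) 1))
      (nhds (-2 * ∑ n ∈ Finset.range k,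
          (∏ j ∈ Finset.range n, (1 + ζ ^ (4 * j + 4))) /
            (∏ j ∈ Finset.range (n + 1), (1 + ζ ^ (4 * j + 2))) * ζ ^ (2 * n ^ 2 + 6 * n + 4))) := by
  refine ((tendsto_tsum_T0Term hk hζ).const_mul (-2)).congr' ?_
  filter_upwards [self_mem_nhdsWithin] with t ht
  refine (S0_sub_theta (mul_ne_zero ?_ (hζ.ne_zero (by omega))) ?_).symm
  · exact_mod_cast ht.1.ne'
  · rw [norm_mul, hζ.norm'_eq_one (by omega), mul_one, Complex.norm_of_nonneg ht.1.le]
    exact ht.2
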